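/- arXiv:2008.11969 — 5 statements merged into one kernel-verified Lean document; each statement's English description precedes it below -/
import Mathlib

section
/- Let H ⊆ ℝⁿ be a nonempty compact convex set, let F: ℝⁿ → ℝⁿ be strictly monotone, let h* solve VI(F, H), and let c > 0. Then for every h̄ ∈ ℝⁿ with h̄ ≠ h*, setting h̃ = Π_H(h̄), one has −2(h̄ − h*)ᵀ(F(h̄) + c(h̄ − h̃)) < 2‖h̄ − h̃‖·‖F(h*)‖ − 2c‖h̄ − h̃‖². -/
open RealInnerProductSpace

/-!
Pair each term of the penalized field `F x + c • (x - p)` with `x - z`, where `p` is the projection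
of `x` and `z` solves the variational inequality. The obtuse angle at `p` gives
`‖x - p‖ ^ 2 ≤ ⟪x - z, x - p⟫`. Strict monotonicity replaces `F x` by `F z`, and splitting
`x - z = (x - p) + (p - z)` leaves a Cauchy–Schwarz term together with `⟪p - z, F z⟫`, which is
nonnegative because `p` is feasible.
-/

section InnerProductSpace

variable {E : Type*} [NormedAddCommGroup E] [InnerProductSpace ℝ E] {K : Set E} {p v x z : E}

theorem real_inner_sub_sub_nonpos_of_isMinOn (hK : Convex ℝ K) (hp : p ∈ K)
    (hmin : IsMinOn (‖x - ·‖) K p) (hz : z ∈ K) : ⟪x - p, z - p⟫ ≤ 0 :=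
  (norm_eq_iInf_iff_real_inner_le_zero hK hp).1 (hmin.iInf_eq hp).symm z hz

theorem sq_norm_sub_le_real_inner_of_isMinOn (hK : Convex ℝ K) (hp : p ∈ K)
    (hmin : IsMinOn (‖x - ·‖) K p) (hz : z ∈ K) : ‖x - p‖ ^ 2 ≤ ⟪x - z, x - p⟫ :=
  calc
    ‖x - p‖ ^ 2 ≤ ‖x - p‖ ^ 2 - ⟪x - p, z - p⟫ :=
      (le_sub_self_iff _).2 (real_inner_sub_sub_nonpos_of_isMinOn hK hp hmin hz)
    _ = ⟪x - z, x - p⟫ := by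
      rw [← real_inner_self_eq_norm_sq, ← inner_sub_right, sub_sub_sub_cancel_right,
        real_inner_comm]

theorem neg_norm_mul_norm_le_real_inner_sub (x : E) (h : 0 ≤ ⟪p - z, v⟫) :
    -(‖x - p‖ * ‖v‖) ≤ ⟪x - z, v⟫ :=
  calc
    -(‖x - p‖ * ‖v‖) ≤ ⟪x - p, v⟫ := neg_le_of_abs_le (abs_real_inner_le_norm _ _)
    _ ≤ ⟪x - p, v⟫ + ⟪p - z, v⟫ := le_add_of_nonneg_right h
    _ = ⟪x - z, v⟫ := by rw [← inner_add_left, sub_add_sub_cancel]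

theorem penalty_lie_derivative_strict_general {F : E → E} {c : ℝ} (hK : Convex ℝ K)
    (hmono : 0 < ⟪F x - F z, x - z⟫) (hz : z ∈ K) (hsol : ∀ y ∈ K, 0 ≤ ⟪y - z, F z⟫)
    (hc : 0 ≤ c) (hp : p ∈ K) (hmin : IsMinOn (‖x - ·‖) K p) :
    -2 * ⟪x - z, F x + c • (x - p)⟫ <
      2 * ‖x - p‖ * ‖F z‖ - 2 * c * ‖x - p‖ ^ 2 := by
  have field_lt : -(‖x - p‖ * ‖F z‖) < ⟪x - z, F x⟫ :=
    calc
      -(‖x - p‖ * ‖F z‖) ≤ ⟪x - z, F z⟫ := neg_norm_mul_norm_le_real_inner_sub x (hsol p hp)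
      _ < ⟪x - z, F x⟫ := by rwa [real_inner_comm, inner_sub_right, sub_pos] at hmono
  have penalty_le : c * ‖x - p‖ ^ 2 ≤ c * ⟪x - z, x - p⟫ :=
    mul_le_mul_of_nonneg_left (sq_norm_sub_le_real_inner_of_isMinOn hK hp hmin hz) hc
  rw [inner_add_right, real_inner_smul_right]
  linarith

end InnerProductSpace

/-- Lie-derivative bound in the penalty-driven analysis under strict
monotonicity: for `h̄ ≠ h*` and `h̃ = Π_H(h̄)`,
`-2⟪h̄ - h*, F h̄ + c (h̄ - h̃)⟫ < 2‖h̄ - h̃‖ ‖F h*‖ - 2 c ‖h̄ - h̃‖²`. -/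
theorem penalty_lie_derivative_strict {n : ℕ}
    (H : Set (EuclideanSpace ℝ (Fin n)))
    (hne : H.Nonempty) (hcompact : IsCompact H) (hconv : Convex ℝ H)
    (F : EuclideanSpace ℝ (Fin n) → EuclideanSpace ℝ (Fin n))
    (hmono : ∀ x y, x ≠ y → 0 < ⟪F x - F y, x - y⟫)
    (hstar : EuclideanSpace ℝ (Fin n))
    (hsol : hstar ∈ H ∧ ∀ h ∈ H, 0 ≤ ⟪h - hstar, F hstar⟫)
    (c : ℝ) (hc : 0 < c)
    (hbar : EuclideanSpace ℝ (Fin n)) (hbar_ne : hbar ≠ hstar)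
    (htil : EuclideanSpace ℝ (Fin n))
    (hproj : htil ∈ H ∧ ∀ y ∈ H, ‖hbar - htil‖ ≤ ‖hbar - y‖) :
    -2 * ⟪hbar - hstar, F hbar + c • (hbar - htil)⟫ <
      2 * ‖hbar - htil‖ * ‖F hstar‖ - 2 * c * ‖hbar - htil‖ ^ 2 := by
  exact penalty_lie_derivative_strict_general hconv (hmono hbar hstar hbar_ne) hsol.1 hsol.2 hc.le
    hproj.1 hproj.2
end

section
/- Let H ⊆ ℝⁿ be a nonempty compact convex set, let F: ℝⁿ → ℝⁿ be strongly monotone with constant c_F > 0, let h* solve VI(F, H), and let c > 0. Then for every h̄ ∈ ℝⁿ, setting h̃ = Π_H(h̄), one has −2(h̄ − h*)ᵀ(F(h̄) + c(h̄ − h̃)) ≤ −2c_F‖h̄ − h*‖² + 2‖h̄ − h̃‖·‖F(h*)‖ − 2c‖h̄ − h̃‖². -/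
open RealInnerProductSpace

/-!
Let `p` be the projection of `x` onto `K` and `z` a solution of the variational inequality.
The penalty direction `x - p` makes an inner product of at least `‖x - p‖²` with `x - z`, because
`z ∈ K` lies on the far side of the supporting hyperplane of `K` at `p`. Strong monotonicity
replaces `F x` by `F z` at a gain of `cF * ‖x - z‖²`. Finally `⟪x - z, F z⟫` splits at `p`: the
variational inequality makes `⟪p - z, F z⟫` nonnegative, and Cauchy–Schwarz bounds the rest.
-/

section PenaltyDescent

variable {E : Type*} [NormedAddCommGroup E] [InnerProductSpace ℝ E]
  {K : Set E} {F : E → E} {x p z : E}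

/-- `IsVISolution F K z` says that `z` solves the variational inequality `VI(F, K)`; membership in
`K` is part of being a solution. -/
def IsVISolution (F : E → E) (K : Set E) (z : E) : Prop :=
  z ∈ K ∧ ∀ y ∈ K, 0 ≤ ⟪y - z, F z⟫

theorem inner_sub_sub_nonpos_of_isMinOn_norm_sub (hK : Convex ℝ K) (hp : p ∈ K)
    (hmin : IsMinOn (fun y ↦ ‖x - y‖) K p) {y : E} (hy : y ∈ K) :
    ⟪x - p, y - p⟫ ≤ 0 :=
  (norm_eq_iInf_iff_real_inner_le_zero hK hp).1 (hmin.iInf_eq hp).symm y hy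

theorem norm_sub_sq_le_inner_of_isMinOn_norm_sub (hK : Convex ℝ K) (hp : p ∈ K)
    (hmin : IsMinOn (fun y ↦ ‖x - y‖) K p) {y : E} (hy : y ∈ K) :
    ‖x - p‖ ^ 2 ≤ ⟪x - y, x - p⟫ :=
  calc
    ‖x - p‖ ^ 2 ≤ ‖x - p‖ ^ 2 - ⟪x - p, y - p⟫ :=
      (le_sub_self_iff _).2 (inner_sub_sub_nonpos_of_isMinOn_norm_sub hK hp hmin hy)
    _ = ⟪x - p, (x - p) - (y - p)⟫ := by rw [inner_sub_right _ (x - p), real_inner_self_eq_norm_sq]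
    _ = ⟪x - y, x - p⟫ := by rw [sub_sub_sub_cancel_right, real_inner_comm]

theorem IsVISolution.neg_norm_mul_norm_le_inner (hz : IsVISolution F K z) (hp : p ∈ K) (x : E) :
    -(‖x - p‖ * ‖F z‖) ≤ ⟪x - z, F z⟫ :=
  calc
    -(‖x - p‖ * ‖F z‖) ≤ ⟪x - p, F z⟫ := neg_le_of_abs_le (abs_real_inner_le_norm _ _)
    _ ≤ ⟪x - p, F z⟫ + ⟪p - z, F z⟫ := le_add_of_nonneg_right (hz.2 p hp)
    _ = ⟪x - z, F z⟫ := by rw [← inner_add_left, sub_add_sub_cancel]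

theorem IsVISolution.mul_norm_sub_sq_sub_le_inner (hz : IsVISolution F K z) (hp : p ∈ K) {cF : ℝ}
    (hF : cF * ‖x - z‖ ^ 2 ≤ ⟪F x - F z, x - z⟫) :
    cF * ‖x - z‖ ^ 2 - ‖x - p‖ * ‖F z‖ ≤ ⟪x - z, F x⟫ :=
  calc
    cF * ‖x - z‖ ^ 2 - ‖x - p‖ * ‖F z‖ ≤ ⟪F x - F z, x - z⟫ + ⟪x - z, F z⟫ :=
      add_le_add hF (hz.neg_norm_mul_norm_le_inner hp x)
    _ = ⟪x - z, F x⟫ := by rw [real_inner_comm, ← inner_add_right, sub_add_cancel]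

theorem penalty_lie_derivative_strong_general (hK : Convex ℝ K) (hz : IsVISolution F K z)
    {cF : ℝ} (hF : cF * ‖x - z‖ ^ 2 ≤ ⟪F x - F z, x - z⟫) {c : ℝ} (hc : 0 ≤ c)
    (hp : p ∈ K) (hmin : IsMinOn (fun y ↦ ‖x - y‖) K p) :
    -2 * ⟪x - z, F x + c • (x - p)⟫ ≤
      -2 * cF * ‖x - z‖ ^ 2 + 2 * ‖x - p‖ * ‖F z‖ - 2 * c * ‖x - p‖ ^ 2 := by
  have drift : cF * ‖x - z‖ ^ 2 - ‖x - p‖ * ‖F z‖ ≤ ⟪x - z, F x⟫ :=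
    hz.mul_norm_sub_sq_sub_le_inner hp hF
  have penalty : c * ‖x - p‖ ^ 2 ≤ c * ⟪x - z, x - p⟫ :=
    mul_le_mul_of_nonneg_left (norm_sub_sq_le_inner_of_isMinOn_norm_sub hK hp hmin hz.1) hc
  rw [inner_add_right, real_inner_smul_right]
  linarith

end PenaltyDescent

/-- Lie-derivative bound in the penalty-driven analysis under strong
monotonicity: for any `h̄` and `h̃ = Π_H(h̄)`,
`-2⟪h̄ - h*, F h̄ + c (h̄ - h̃)⟫ ≤ -2 c_F ‖h̄ - h*‖² + 2‖h̄ - h̃‖ ‖F h*‖ - 2 c ‖h̄ - h̃‖²`. -/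
theorem penalty_lie_derivative_strong {n : ℕ}
    (H : Set (EuclideanSpace ℝ (Fin n)))
    (hne : H.Nonempty) (hcompact : IsCompact H) (hconv : Convex ℝ H)
    (F : EuclideanSpace ℝ (Fin n) → EuclideanSpace ℝ (Fin n))
    (cF : ℝ) (hcF : 0 < cF)
    (hmono : ∀ x y, cF * ‖x - y‖ ^ 2 ≤ ⟪F x - F y, x - y⟫)
    (hstar : EuclideanSpace ℝ (Fin n))
    (hsol : hstar ∈ H ∧ ∀ h ∈ H, 0 ≤ ⟪h - hstar, F hstar⟫)
    (c : ℝ) (hc : 0 < c)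
    (hbar : EuclideanSpace ℝ (Fin n))
    (htil : EuclideanSpace ℝ (Fin n))
    (hproj : htil ∈ H ∧ ∀ y ∈ H, ‖hbar - htil‖ ≤ ‖hbar - y‖) :
    -2 * ⟪hbar - hstar, F hbar + c • (hbar - htil)⟫ ≤
      -2 * cF * ‖hbar - hstar‖ ^ 2
        + 2 * ‖hbar - htil‖ * ‖F hstar‖ - 2 * c * ‖hbar - htil‖ ^ 2 :=
  penalty_lie_derivative_strong_general hconv hsol (hmono hbar hstar) hc.le hproj.1 hproj.2
end

section
/- Let H ⊆ ℝⁿ be a nonempty compact convex set, let F: ℝⁿ → ℝⁿ be strictly monotone, let h* solve VI(F, H), let d > 0, and set c = d‖F(h*)‖. Then for every h̄ ∈ ℝⁿ with h̄ ≠ h*, setting h̃ = Π_H(h̄), one has −2(h̄ − h*)ᵀ(F(h̄) + c(h̄ − h̃)) < ‖F(h*)‖ / (2d). -/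
open RealInnerProductSpace

/-!
Put `t = ‖h̄ - h̃‖` and `f = ‖F h*‖`. Strict monotonicity replaces `F h̄` by `F h*` in
`⟪h̄ - h*, F h̄⟫`; splitting `h̄ - h* = (h̃ - h*) + (h̄ - h̃)`, the variational inequality at `h̃`
disposes of the first part and Cauchy–Schwarz bounds the second below by `-f t`. The obtuse-angle
property of the projection bounds the penalty term below by `c t²`. With `c = d f` the quantity to
estimate is thus less than `f (2 t - 2 d t²)`, and `2 t - 2 d t²` is largest at `t = 1 / (2 d)`.
-/

theorem mul_sub_mul_sq_le_sq_div {K : Type*} [Field K] [LinearOrder K] [IsStrictOrderedRing K]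
    (a t : K) {b : K} (hb : 0 < b) : a * t - b * t ^ 2 ≤ a ^ 2 / (4 * b) := by
  rw [le_div_iff₀ (by positivity)]
  linarith [sq_nonneg (2 * b * t - a)]

section InnerProductSpace

variable {E : Type*} [NormedAddCommGroup E] [InnerProductSpace ℝ E]

theorem real_inner_sub_nonpos_of_isMinOn_norm_sub {H : Set E} (hconv : Convex ℝ H) {x p y : E}
    (hp : p ∈ H) (hmin : IsMinOn (fun z => ‖x - z‖) H p) (hy : y ∈ H) : ⟪x - p, y - p⟫ ≤ 0 :=
  (norm_eq_iInf_iff_real_inner_le_zero hconv hp).1 (hmin.iInf_eq hp).symm y hy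

theorem norm_sub_sq_le_real_inner_of_isMinOn_norm_sub {H : Set E} (hconv : Convex ℝ H)
    {x p y : E} (hp : p ∈ H) (hmin : IsMinOn (fun z => ‖x - z‖) H p) (hy : y ∈ H) :
    ‖x - p‖ ^ 2 ≤ ⟪x - y, x - p⟫ :=
  calc ‖x - p‖ ^ 2 ≤ ‖x - p‖ ^ 2 - ⟪x - p, y - p⟫ :=
        (le_sub_self_iff _).2 (real_inner_sub_nonpos_of_isMinOn_norm_sub hconv hp hmin hy)
    _ = ⟪x - y, x - p⟫ := by
        rw [← real_inner_self_eq_norm_sq, ← inner_sub_right, sub_sub_sub_cancel_right,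
          real_inner_comm]

theorem neg_norm_mul_norm_lt_real_inner_of_inner_sub_pos {F : E → E} {x y p : E}
    (hmono : 0 < ⟪F x - F y, x - y⟫) (hp : 0 ≤ ⟪p - y, F y⟫) :
    -(‖F y‖ * ‖x - p‖) < ⟪x - y, F x⟫ :=
  calc -(‖F y‖ * ‖x - p‖) ≤ ⟪x - p, F y⟫ := by
        rw [mul_comm]
        exact neg_le_of_abs_le (abs_real_inner_le_norm _ _)
    _ ≤ ⟪p - y, F y⟫ + ⟪x - p, F y⟫ := le_add_of_nonneg_left hp
    _ = ⟪x - y, F y⟫ := by rw [← inner_add_left, sub_add_sub_cancel']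
    _ < ⟪x - y, F x⟫ := by
        rwa [← sub_pos, ← inner_sub_right, real_inner_comm]

theorem penalty_lie_derivative_bound_general {H : Set E} (hconv : Convex ℝ H) {F : E → E}
    {hstar : E} (hsol : hstar ∈ H ∧ ∀ h ∈ H, 0 ≤ ⟪h - hstar, F hstar⟫)
    {d : ℝ} (hd : 0 < d) {c : ℝ} (hc : c = d * ‖F hstar‖)
    {hbar : E} (hmono : 0 < ⟪F hbar - F hstar, hbar - hstar⟫)
    {htil : E} (hproj : htil ∈ H ∧ ∀ y ∈ H, ‖hbar - htil‖ ≤ ‖hbar - y‖) :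
    -2 * ⟪hbar - hstar, F hbar + c • (hbar - htil)⟫ < ‖F hstar‖ / (2 * d) := by
  obtain ⟨hstar_mem, hvi⟩ := hsol
  obtain ⟨htil_mem, hnorm_le⟩ := hproj
  have hmin : IsMinOn (fun z => ‖hbar - z‖) H htil := isMinOn_iff.2 hnorm_le
  set t := ‖hbar - htil‖
  set f := ‖F hstar‖
  have hforce : -(f * t) < ⟪hbar - hstar, F hbar⟫ :=
    neg_norm_mul_norm_lt_real_inner_of_inner_sub_pos hmono (hvi htil htil_mem)
  have hpenalty : c * t ^ 2 ≤ c * ⟪hbar - hstar, hbar - htil⟫ := by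
    have hc_nonneg : 0 ≤ c := by rw [hc]; positivity
    gcongr
    exact norm_sub_sq_le_real_inner_of_isMinOn_norm_sub hconv htil_mem hmin hstar_mem
  calc -2 * ⟪hbar - hstar, F hbar + c • (hbar - htil)⟫
      = -2 * ⟪hbar - hstar, F hbar⟫ - 2 * (c * ⟪hbar - hstar, hbar - htil⟫) := by
        rw [inner_add_right, real_inner_smul_right]; ring
    _ < 2 * (f * t) - 2 * (c * t ^ 2) := by linarith
    _ = f * (2 * t - 2 * d * t ^ 2) := by rw [hc]; ring
    _ ≤ f * (2 ^ 2 / (4 * (2 * d))) := by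
        gcongr
        exact mul_sub_mul_sq_le_sq_div 2 t (by positivity)
    _ = f / (2 * d) := by field_simp; norm_num

end InnerProductSpace

/-- Lie-derivative bound in the penalty-driven analysis with penalty constant
`c = d ‖F h*‖`: for `h̄ ≠ h*` and `h̃ = Π_H(h̄)`,
`-2⟪h̄ - h*, F h̄ + c (h̄ - h̃)⟫ < ‖F h*‖ / (2 d)`. -/
theorem penalty_lie_derivative_bound {n : ℕ}
    (H : Set (EuclideanSpace ℝ (Fin n)))
    (hne : H.Nonempty) (hcompact : IsCompact H) (hconv : Convex ℝ H)
    (F : EuclideanSpace ℝ (Fin n) → EuclideanSpace ℝ (Fin n))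
    (hmono : ∀ x y, x ≠ y → 0 < ⟪F x - F y, x - y⟫)
    (hstar : EuclideanSpace ℝ (Fin n))
    (hsol : hstar ∈ H ∧ ∀ h ∈ H, 0 ≤ ⟪h - hstar, F hstar⟫)
    (d : ℝ) (hd : 0 < d) (c : ℝ) (hc : c = d * ‖F hstar‖)
    (hbar : EuclideanSpace ℝ (Fin n)) (hbar_ne : hbar ≠ hstar)
    (htil : EuclideanSpace ℝ (Fin n))
    (hproj : htil ∈ H ∧ ∀ y ∈ H, ‖hbar - htil‖ ≤ ‖hbar - y‖) :
    -2 * ⟪hbar - hstar, F hbar + c • (hbar - htil)⟫ < ‖F hstar‖ / (2 * d) := by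
  exact penalty_lie_derivative_bound_general hconv hsol hd hc (hmono hbar hstar hbar_ne) hproj
end

section
/- Let F: ℝⁿ → ℝⁿ be strictly monotone, let q: ℝⁿ → ℝˢ and l: ℝⁿ → ℝᵗ be affine maps with (constant) Jacobians Dq and Dl, and define H(h, λ, μ) := F(h) + Dqᵀλ + Dlᵀμ. Let (h*, λ*, μ*) ∈ ℝⁿ × ℝˢ × ℝᵗ be a KKT point, i.e., H(h*, λ*, μ*) = 0, l(h*) = 0, q(h*) ≤ 0 componentwise, λ* ≥ 0 componentwise, and (λ*)ᵀq(h*) = 0. Then for all h̄ ∈ ℝⁿ with h̄ ≠ h*, all λ̄ ∈ ℝˢ with λ̄ ≥ 0 componentwise, and all μ̄ ∈ ℝᵗ, one has −2(h̄ − h*)ᵀ H(h̄, λ̄, μ̄) + 2(λ̄ − λ*)ᵀ [q(h̄)]_{λ̄}⁺ + 2(μ̄ − μ*)ᵀ l(h̄) < 0. -/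
open RealInnerProductSpace

/-!
Subtract `H (h*, λ*, μ*) = 0` from `H (h, λ, μ)` and pair with `h - h*`: as `q` and `l` are affine,
the adjoints turn the multiplier terms into `⟪λ - λ*, q h - q h*⟫` and `⟪μ - μ*, l h - l h*⟫`. The
second cancels against the equality-multiplier term of the Lie derivative. In the first, replacing
`q h` by its truncation only decreases `⟪λ - λ*, q h⟫`, since the truncation raises a coordinate
only where `λ` vanishes and hence does not exceed `λ*`, while complementary slackness gives
`⟪λ - λ*, q h*⟫ ≤ 0`. What survives is at most `-2 ⟪F h - F h*, h - h*⟫`.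
-/

section KKTMap

variable {E Λ M : Type*}
  [NormedAddCommGroup E] [InnerProductSpace ℝ E] [CompleteSpace E]
  [NormedAddCommGroup Λ] [InnerProductSpace ℝ Λ] [CompleteSpace Λ]
  [NormedAddCommGroup M] [InnerProductSpace ℝ M] [CompleteSpace M]

/-- The stationarity map `H (x, lam, mu) = F x + Dqᵀ lam + Dlᵀ mu` of the variational problem for
`F` with affine inequality constraints `q` and equality constraints `l`. The constant Jacobians are
the linear parts of the bundled affine maps. -/
noncomputable def kktMap (F : E → E) (q : E →ᴬ[ℝ] Λ) (l : E →ᴬ[ℝ] M) (x : E) (lam : Λ) (mu : M) :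
    E :=
  F x + ContinuousLinearMap.adjoint q.contLinear lam + ContinuousLinearMap.adjoint l.contLinear mu

theorem inner_sub_adjoint_contLinear (q : E →ᴬ[ℝ] Λ) (x y : E) (v : Λ) :
    ⟪x - y, ContinuousLinearMap.adjoint q.contLinear v⟫ = ⟪v, q x - q y⟫ := by
  rw [ContinuousLinearMap.adjoint_inner_right, real_inner_comm, ← vsub_eq_sub x y,
    ContinuousAffineMap.contLinear_map_vsub, vsub_eq_sub]

theorem inner_sub_kktMap_sub_kktMap (F : E → E) (q : E →ᴬ[ℝ] Λ) (l : E →ᴬ[ℝ] M) (x y : E)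
    (lam lam' : Λ) (mu mu' : M) :
    ⟪x - y, kktMap F q l x lam mu - kktMap F q l y lam' mu'⟫ =
      ⟪F x - F y, x - y⟫ + ⟪lam - lam', q x - q y⟫ + ⟪mu - mu', l x - l y⟫ := by
  simp only [kktMap, add_sub_add_comm, ← map_sub, inner_add_right, inner_sub_adjoint_contLinear,
    real_inner_comm]

end KKTMap

section ProjectedRate

variable {ι : Type*}

/-- The operator `[v]_lam⁺`, the rate at which a multiplier `lam` driven by `v` moves without
leaving the nonnegative orthant. Coordinates with `lam j < 0`, where `[v]_lam⁺` is undefined, are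
treated like those with `lam j = 0`. -/
noncomputable def projectedRate (v lam : EuclideanSpace ℝ ι) : EuclideanSpace ℝ ι :=
  WithLp.toLp 2 fun j => if 0 < lam j then v j else max (v j) 0

variable [Fintype ι]

theorem inner_sub_projectedRate_le (v lam : EuclideanSpace ℝ ι) {lam' : EuclideanSpace ℝ ι}
    (hlam' : ∀ j, 0 ≤ lam' j) :
    ⟪lam - lam', projectedRate v lam⟫ ≤ ⟪lam - lam', v⟫ := by
  simp only [PiLp.inner_apply, RCLike.inner_apply, conj_trivial, PiLp.sub_apply, projectedRate]
  refine Finset.sum_le_sum fun j _ => ?_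
  split_ifs with hj
  · exact le_rfl
  · have hle : lam j - lam' j ≤ 0 := sub_nonpos.2 ((not_lt.1 hj).trans (hlam' j))
    exact mul_le_mul_of_nonpos_right (le_max_left _ _) hle

theorem inner_nonpos_of_nonneg_of_nonpos {lam v : EuclideanSpace ℝ ι} (hlam : ∀ j, 0 ≤ lam j)
    (hv : ∀ j, v j ≤ 0) : ⟪lam, v⟫ ≤ 0 := by
  simp only [PiLp.inner_apply, RCLike.inner_apply, conj_trivial]
  exact Finset.sum_nonpos fun j _ => mul_nonpos_of_nonpos_of_nonneg (hv j) (hlam j)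

end ProjectedRate

section KKTPoint

variable {E M ι : Type*} [Fintype ι]
  [NormedAddCommGroup E] [InnerProductSpace ℝ E] [CompleteSpace E]
  [NormedAddCommGroup M] [InnerProductSpace ℝ M] [CompleteSpace M]
  {F : E → E} {q : E →ᴬ[ℝ] EuclideanSpace ℝ ι} {l : E →ᴬ[ℝ] M}
  {xStar : E} {lamStar : EuclideanSpace ℝ ι} {muStar : M}

/-- The KKT conditions at `(x, lam, mu)` for the variational problem of `F` on
`{x | q x ≤ 0, l x = 0}`: stationarity, feasibility, and complementary slackness, the last written
as orthogonality of `lam` and `q x`. -/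
structure IsKKTPoint (F : E → E) (q : E →ᴬ[ℝ] EuclideanSpace ℝ ι) (l : E →ᴬ[ℝ] M)
    (x : E) (lam : EuclideanSpace ℝ ι) (mu : M) : Prop where
  kktMap_eq_zero : kktMap F q l x lam mu = 0
  eq_zero : l x = 0
  nonpos : ∀ j, q x j ≤ 0
  multiplier_nonneg : ∀ j, 0 ≤ lam j
  inner_eq_zero : ⟪lam, q x⟫ = 0

namespace IsKKTPoint

theorem inner_sub_kktMap (hK : IsKKTPoint F q l xStar lamStar muStar) (x : E)
    (lam : EuclideanSpace ℝ ι) (mu : M) :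
    ⟪x - xStar, kktMap F q l x lam mu⟫ =
      ⟪F x - F xStar, x - xStar⟫ + ⟪lam - lamStar, q x - q xStar⟫ + ⟪mu - muStar, l x⟫ := by
  simpa only [hK.kktMap_eq_zero, hK.eq_zero, sub_zero] using
    inner_sub_kktMap_sub_kktMap F q l x xStar lam lamStar mu muStar

theorem inner_multiplier_sub_nonpos (hK : IsKKTPoint F q l xStar lamStar muStar)
    {lam : EuclideanSpace ℝ ι} (hlam : ∀ j, 0 ≤ lam j) : ⟪lam - lamStar, q xStar⟫ ≤ 0 := by
  rw [inner_sub_left, hK.inner_eq_zero, sub_zero]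
  exact inner_nonpos_of_nonneg_of_nonpos hlam hK.nonpos

theorem lie_derivative_le (hK : IsKKTPoint F q l xStar lamStar muStar) (x : E)
    {lam : EuclideanSpace ℝ ι} (hlam : ∀ j, 0 ≤ lam j) (mu : M) :
    -2 * ⟪x - xStar, kktMap F q l x lam mu⟫ + 2 * ⟪lam - lamStar, projectedRate (q x) lam⟫
      + 2 * ⟪mu - muStar, l x⟫ ≤ -2 * ⟪F x - F xStar, x - xStar⟫ := by
  have hrate := inner_sub_projectedRate_le (q x) lam hK.multiplier_nonneg
  have hslack := hK.inner_multiplier_sub_nonpos hlam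
  rw [hK.inner_sub_kktMap, inner_sub_right (lam - lamStar)]
  linarith

end IsKKTPoint

theorem multiplier_lie_derivative_neg_strict_general
    (hK : IsKKTPoint F q l xStar lamStar muStar)
    (hF : ∀ y, y ≠ xStar → 0 < ⟪F y - F xStar, y - xStar⟫) {x : E} (hx : x ≠ xStar)
    {lam : EuclideanSpace ℝ ι} (hlam : ∀ j, 0 ≤ lam j) (mu : M) :
    -2 * ⟪x - xStar, kktMap F q l x lam mu⟫ + 2 * ⟪lam - lamStar, projectedRate (q x) lam⟫
      + 2 * ⟪mu - muStar, l x⟫ < 0 :=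
  (hK.lie_derivative_le x hlam mu).trans_lt (by linarith [hF x hx])

end KKTPoint

/-- Negativity of the Lie derivative of the Lyapunov function in the
multiplier-driven algorithm analysis, under strict monotonicity: at a KKT
point `(h*, λ*, μ*)`, for all `h̄ ≠ h*`, `λ̄ ≥ 0`, `μ̄`:
`-2⟪h̄ - h*, H(h̄, λ̄, μ̄)⟫ + 2⟪λ̄ - λ*, [q h̄]_{λ̄}⁺⟫ + 2⟪μ̄ - μ*, l h̄⟫ < 0`. -/
theorem multiplier_lie_derivative_neg_strict {n s t : ℕ}
    (F : EuclideanSpace ℝ (Fin n) → EuclideanSpace ℝ (Fin n))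
    (hmono : ∀ x y, x ≠ y → 0 < ⟪F x - F y, x - y⟫)
    (Dq : EuclideanSpace ℝ (Fin n) →L[ℝ] EuclideanSpace ℝ (Fin s))
    (q0 : EuclideanSpace ℝ (Fin s))
    (Dl : EuclideanSpace ℝ (Fin n) →L[ℝ] EuclideanSpace ℝ (Fin t))
    (l0 : EuclideanSpace ℝ (Fin t))
    (q : EuclideanSpace ℝ (Fin n) → EuclideanSpace ℝ (Fin s))
    (hq : ∀ h, q h = Dq h + q0)
    (l : EuclideanSpace ℝ (Fin n) → EuclideanSpace ℝ (Fin t))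
    (hl : ∀ h, l h = Dl h + l0)
    (H : EuclideanSpace ℝ (Fin n) → EuclideanSpace ℝ (Fin s) →
      EuclideanSpace ℝ (Fin t) → EuclideanSpace ℝ (Fin n))
    (hH : ∀ h lam mu, H h lam mu =
      F h + ContinuousLinearMap.adjoint Dq lam + ContinuousLinearMap.adjoint Dl mu)
    (hstar : EuclideanSpace ℝ (Fin n)) (lamStar : EuclideanSpace ℝ (Fin s))
    (muStar : EuclideanSpace ℝ (Fin t))
    (hstat : H hstar lamStar muStar = 0)
    (hl0 : l hstar = 0)
    (hq0 : ∀ j, q hstar j ≤ 0)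
    (hlamStar : ∀ j, 0 ≤ lamStar j)
    (hcomp : ⟪lamStar, q hstar⟫ = 0)
    (hbar : EuclideanSpace ℝ (Fin n)) (hbar_ne : hbar ≠ hstar)
    (lamBar : EuclideanSpace ℝ (Fin s)) (hlamBar : ∀ j, 0 ≤ lamBar j)
    (muBar : EuclideanSpace ℝ (Fin t))
    (qplus : EuclideanSpace ℝ (Fin s))
    (hqplus : ∀ j, qplus j = if 0 < lamBar j then q hbar j else max (q hbar j) 0) :
    -2 * ⟪hbar - hstar, H hbar lamBar muBar⟫
      + 2 * ⟪lamBar - lamStar, qplus⟫ + 2 * ⟪muBar - muStar, l hbar⟫ < 0 := by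
  let qA := Dq.toContinuousAffineMap + ContinuousAffineMap.const ℝ _ q0
  let lA := Dl.toContinuousAffineMap + ContinuousAffineMap.const ℝ _ l0
  obtain rfl : q = qA := funext hq
  obtain rfl : l = lA := funext hl
  obtain rfl : H = kktMap F qA lA := by
    funext h lam mu
    simp [hH, kktMap, qA, lA]
  obtain rfl : qplus = projectedRate (qA hbar) lamBar := PiLp.ext hqplus
  exact multiplier_lie_derivative_neg_strict_general ⟨hstat, hl0, hq0, hlamStar, hcomp⟩
    (fun y => hmono y hstar) hbar_ne hlamBar muBar
end

section
/- Let P be a finite set of paths partitioned into nonempty subsets P_w indexed by a finite set W of origin-destination pairs, let d_w ≥ 0 for each w ∈ W, and let H = { h ∈ ℝ^P : h_p ≥ 0 for all p ∈ P, and Σ_{p ∈ P_w} h_p = d_w for all w ∈ W }. Let F: ℝ^P → ℝ^P be any map. Then a point h* ∈ H satisfies the Wardrop equilibrium conditions — for every w ∈ W and every p ∈ P_w with h*_p > 0, F_p(h*) ≤ F_q(h*) for all q ∈ P_w — if and only if h* solves VI(F, H). -/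
open RealInnerProductSpace

/-!
The Wardrop conditions say that `h*` uses only cheapest paths, so each origin-destination pair `w`
has an equilibrium cost `u w` with `u w ≤ F_p(h*)` on `P_w`, with equality wherever `h*_p > 0`.
All feasible flows carry the same demand, hence the same total cost with respect to `u`; every
other flow therefore costs at least as much as `h*` (complementary slackness). Conversely, testing
the variational inequality on the flow that moves the whole of `h*_p` from `p` to `q` gives
`0 ≤ h*_p (F_q(h*) - F_p(h*))`.
-/

section WardropEquilibrium

variable {P W R : Type*}

/-- The Wardrop conditions for a flow `x` on paths `P` with path costs `c`: no path in use is
dearer than another path joining the same origin-destination pair. The partition into the `P_w` is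
encoded by its label map `r`, and the costs are those at the flow itself, `c = F x`. -/
def IsWardropFlow [Zero R] [Preorder R] (r : P → W) (c x : P → R) : Prop :=
  ∀ p, 0 < x p → ∀ q, r q = r p → c p ≤ c q

theorem IsWardropFlow.exists_equilibrium_cost [Finite P] [Zero R] [LinearOrder R]
    {r : P → W} {c x : P → R} (hx : IsWardropFlow r c x) :
    ∃ u : W → R, ∀ p, u (r p) ≤ c p ∧ (0 < x p → u (r p) = c p) := by
  have exists_cost (w : W) : ∃ a, ∀ p, r p = w → a ≤ c p ∧ (0 < x p → a = c p) := by
    by_cases hw : (r ⁻¹' {w}).Nonempty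
    · obtain ⟨m, rfl, hm⟩ := Set.exists_min_image _ c (Set.toFinite _) hw
      exact ⟨c m, fun p hp => ⟨hm p hp, fun hpos => (hm p hp).antisymm (hx p hpos m hp.symm)⟩⟩
    · exact ⟨0, fun p hp => (hw ⟨p, hp⟩).elim⟩
  choose u hu using exists_cost
  exact ⟨u, fun p => hu (r p) p rfl⟩

variable [Fintype P] [DecidableEq W]

/-- The feasible set `H`: nonnegative flows on the paths `P` whose total over each fibre `P_w` of
the label map `r` is the demand `d w`. -/
def feasibleFlows [AddCommMonoid R] [Preorder R] (r : P → W) (d : W → R) : Set (P → R) :=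
  {x | (∀ p, 0 ≤ x p) ∧ ∀ w, ∑ p with r p = w, x p = d w}

variable {r : P → W} {d : W → R} {x y : P → R}

theorem sub_dotProduct_comp_eq_zero_of_mem_feasibleFlows [Ring R] [Preorder R]
    (hx : x ∈ feasibleFlows r d) (hy : y ∈ feasibleFlows r d) (u : W → R) :
    (y - x) ⬝ᵥ (u ∘ r) = 0 := by
  rw [dotProduct, ← Finset.sum_fiberwise_of_maps_to fun _ => Finset.mem_image_of_mem r]
  refine Finset.sum_eq_zero fun w _ => ?_
  calc ∑ p with r p = w, (y - x) p * (u ∘ r) p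
      = ∑ p with r p = w, (y p - x p) * u w :=
        Finset.sum_congr rfl fun p hp => by
          rw [Pi.sub_apply, Function.comp_apply, (Finset.mem_filter.mp hp).2]
    _ = (d w - d w) * u w := by
        rw [← Finset.sum_mul, Finset.sum_sub_distrib, hx.2 w, hy.2 w]
    _ = 0 := by rw [sub_self, zero_mul]

theorem add_single_sub_single_mem_feasibleFlows [DecidableEq P] [AddCommGroup R]
    [PartialOrder R] [IsOrderedAddMonoid R] (hx : x ∈ feasibleFlows r d) {p q : P}
    (hqp : r q = r p) {t : R} (ht : 0 ≤ t) (htp : t ≤ x p) :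
    x + (Pi.single q t - Pi.single p t) ∈ feasibleFlows r d := by
  constructor
  · have removed_le : Pi.single p t ≤ x := by
      intro s
      obtain rfl | hs := eq_or_ne s p
      · rwa [Pi.single_eq_same]
      · simpa only [Pi.single_eq_of_ne hs] using hx.1 s
    have added_nonneg : 0 ≤ (Pi.single q t : P → R) := Pi.single_nonneg.mpr ht
    rw [add_sub_left_comm]
    exact add_nonneg added_nonneg (sub_nonneg.mpr removed_le)
  · intro w
    simp only [Pi.add_apply, Pi.sub_apply, Finset.sum_add_distrib, Finset.sum_sub_distrib,
      Finset.sum_pi_single', Finset.mem_filter_univ, hqp, sub_self, add_zero, hx.2 w]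

variable [Ring R] [LinearOrder R] [IsStrictOrderedRing R] {c : P → R}

theorem IsWardropFlow.sub_dotProduct_nonneg (hW : IsWardropFlow r c x)
    (hx : x ∈ feasibleFlows r d) (hy : y ∈ feasibleFlows r d) : 0 ≤ (y - x) ⬝ᵥ c := by
  obtain ⟨u, hu⟩ := hW.exists_equilibrium_cost
  rw [← sub_dotProduct_comp_eq_zero_of_mem_feasibleFlows hx hy u]
  refine Finset.sum_le_sum fun p _ => ?_
  obtain ⟨u_le, u_eq⟩ := hu p
  obtain unused | used := (hx.1 p).eq_or_lt
  · rw [Pi.sub_apply, ← unused, sub_zero]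
    exact mul_le_mul_of_nonneg_left u_le (hy.1 p)
  · rw [Function.comp_apply, u_eq used]

theorem isWardropFlow_of_sub_dotProduct_nonneg (hx : x ∈ feasibleFlows r d)
    (hV : ∀ y ∈ feasibleFlows r d, 0 ≤ (y - x) ⬝ᵥ c) : IsWardropFlow r c x := by
  classical
  intro p hp q hq
  have reroute_nonneg := hV _ (add_single_sub_single_mem_feasibleFlows hx hq hp.le le_rfl)
  rw [add_sub_cancel_left, sub_dotProduct, single_dotProduct, single_dotProduct, sub_nonneg]
    at reroute_nonneg
  exact le_of_mul_le_mul_left reroute_nonneg hp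

theorem wardrop_iff_VI_general (hx : x ∈ feasibleFlows r d) :
    IsWardropFlow r c x ↔ ∀ y ∈ feasibleFlows r d, 0 ≤ (y - x) ⬝ᵥ c :=
  ⟨fun hW _ hy => hW.sub_dotProduct_nonneg hx hy, isWardropFlow_of_sub_dotProduct_nonneg hx⟩

end WardropEquilibrium

theorem real_inner_eq_dotProduct {ι : Type*} [Fintype ι]
    (x y : EuclideanSpace ℝ ι) : ⟪x, y⟫ = x.ofLp ⬝ᵥ y.ofLp := by
  rw [EuclideanSpace.inner_eq_star_dotProduct, star_trivial, dotProduct_comm]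

/-- Equivalence of Wardrop equilibria and solutions of the variational
inequality `VI(F, H)` over the feasible flow set
`H = {h | h ≥ 0, ∑_{p ∈ P_w} h_p = d_w}` of a routing game: a feasible flow
`h*` satisfies the Wardrop conditions iff `h*` solves `VI(F, H)`. -/
theorem wardrop_iff_VI {P W : Type*} [Fintype P] [Fintype W] [DecidableEq W]
    (r : P → W) (hr : Function.Surjective r)
    (d : W → ℝ) (hd : ∀ w, 0 ≤ d w)
    (F : EuclideanSpace ℝ P → EuclideanSpace ℝ P)
    (hstar : EuclideanSpace ℝ P)
    (hmem : (∀ p, 0 ≤ hstar p) ∧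
      ∀ w, ∑ p ∈ Finset.univ.filter (fun p => r p = w), hstar p = d w) :
    (∀ p, 0 < hstar p → ∀ q, r q = r p → F hstar p ≤ F hstar q) ↔
      (∀ h : EuclideanSpace ℝ P,
        ((∀ p, 0 ≤ h p) ∧
          ∀ w, ∑ p ∈ Finset.univ.filter (fun p => r p = w), h p = d w) →
        0 ≤ ⟪h - hstar, F hstar⟫) := by
  simp only [real_inner_eq_dotProduct]
  exact (wardrop_iff_VI_general hmem).trans (WithLp.equiv 2 (P → ℝ)).forall_congr_right.symm
end
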